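/- arXiv:0911.0098 — 2 statements merged into one kernel-verified Lean document; each statement's English description precedes it below -/
import Mathlib

section
/- Let {E*_i}_{i=0}^d be a system of mutually orthogonal idempotents in End(V), and let A ∈ End(V) satisfy E*_i A E*_j = 0 if |i−j| > 1 and E*_i A E*_j ≠ 0 if |i−j| = 1 (0 ≤ i, j ≤ d). If γ and γ' are antiautomorphisms of End(V) with A^γ = A = A^{γ'} and (E*_0)^γ = E*_0 = (E*_0)^{γ'}, then γ = γ'. Moreover, any such antiautomorphism γ satisfies X^{γγ} = X for all X ∈ End(V). -/
theorem aux_top {K : Type*} [Field K] {d : ℕ}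
    {V : Type*} [AddCommGroup V] [Module K V] [FiniteDimensional K V]
    (hdim : Module.finrank K V = d + 1)
    (E : Fin (d + 1) → Module.End K V)
    (hE : ∀ i j, E i * E j = if i = j then E i else 0)
    (A : Module.End K V)
    (htri : ∀ i j : Fin (d + 1), 1 < Nat.dist (i : ℕ) (j : ℕ) → E i * A * E j = 0)
    (hirr : ∀ i j : Fin (d + 1), Nat.dist (i : ℕ) (j : ℕ) = 1 → E i * A * E j ≠ 0)
    (v : Fin (d + 1) → V) (hv0 : ∀ i, v i ≠ 0) (hv : ∀ i, E i (v i) = v i)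
    (hvs : ∀ i x, ∃ c : K, E i x = c • v i)
    (W : Submodule K V) (hW0 : v 0 ∈ W) (hWA : ∀ w ∈ W, A w ∈ W) : W = ⊤ := by
  have hEv : ∀ i j, E i (v j) = if i = j then v j else 0 := by
    intro i j
    have h := congrArg (fun T : Module.End K V => T (v j)) (hE i j)
    simp only [Module.End.mul_apply, hv] at h
    rw [h]
    split_ifs with hij
    · subst hij; exact hv i
    · rfl
  have hli : LinearIndependent K v := by
    rw [Fintype.linearIndependent_iff]
    intro g hg i
    have h := congrArg (E i) hg
    simp only [map_sum, map_smul, hEv, map_zero, smul_ite, smul_zero, Finset.sum_ite_eq,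
      Finset.mem_univ, if_true] at h
    exact (smul_eq_zero.mp h).resolve_right (hv0 i)
  have hspan : Submodule.span K (Set.range v) = ⊤ :=
    hli.span_eq_top_of_card_eq_finrank' (by simp [hdim])
  have hsum : ∀ x, ∑ i, E i x = x := by
    intro x
    have hx : x ∈ Submodule.span K (Set.range v) := by rw [hspan]; trivial
    induction hx using Submodule.span_induction with
    | mem x h => obtain ⟨j, rfl⟩ := h; simp [hEv]
    | zero => simp
    | add x y _ _ hx hy => simp [Finset.sum_add_distrib, hx, hy]
    | smul a x _ hx => simp [← Finset.smul_sum, hx]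
  have key : ∀ n, ∀ hn : n < d + 1, v ⟨n, hn⟩ ∈ W := by
    intro n
    induction n using Nat.strong_induction_on with
    | _ n ih =>
      intro hn
      rcases n with _ | k
      · exact hW0
      · have hk : k < d + 1 := by omega
        have hvk := ih k (by omega) hk
        have hA := hWA _ hvk
        have hmem : E ⟨k+1, hn⟩ (A (v ⟨k, hk⟩)) ∈ W := by
          have h := hsum (A (v ⟨k, hk⟩))
          rw [← Finset.add_sum_erase _ _ (Finset.mem_univ (⟨k+1, hn⟩ : Fin (d+1)))] at h
          rw [eq_sub_of_add_eq h]
          refine W.sub_mem hA (W.sum_mem ?_)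
          intro i hi
          have hne : (i : ℕ) ≠ k + 1 := fun h => (Finset.ne_of_mem_erase hi) (Fin.ext h)
          by_cases hik : (i : ℕ) < k + 1
          · obtain ⟨c, hc⟩ := hvs i (A (v ⟨k, hk⟩))
            rw [hc]
            exact W.smul_mem _ (ih i hik i.2)
          · have h0 := htri i ⟨k, hk⟩ (by simp only [Nat.dist]; omega)
            have h1 := congrArg (fun T : Module.End K V => T (v ⟨k, hk⟩)) h0
            simp only [Module.End.mul_apply, hv, LinearMap.zero_apply] at h1
            rw [h1]; exact W.zero_mem
        have hnz : E ⟨k+1, hn⟩ (A (v ⟨k, hk⟩)) ≠ 0 := by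
          intro h0
          refine hirr ⟨k+1, hn⟩ ⟨k, hk⟩ (by simp only [Nat.dist]; omega) ?_
          ext x
          obtain ⟨c, hc⟩ := hvs ⟨k, hk⟩ x
          simp [Module.End.mul_apply, hc, h0]
        obtain ⟨c, hc⟩ := hvs ⟨k+1, hn⟩ (A (v ⟨k, hk⟩))
        rw [hc] at hmem hnz
        have hc0 : c ≠ 0 := fun h => hnz (by simp [h])
        exact (W.smul_mem_iff hc0).mp hmem
  rw [eq_top_iff, ← hspan, Submodule.span_le]
  rintro _ ⟨i, rfl⟩
  exact key i i.2

theorem aux_id {K : Type*} [Field K] {d : ℕ}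
    {V : Type*} [AddCommGroup V] [Module K V] [FiniteDimensional K V]
    (hdim : Module.finrank K V = d + 1)
    (E : Fin (d + 1) → Module.End K V)
    (hE : ∀ i j, E i * E j = if i = j then E i else 0)
    (hEr : ∀ i, Module.finrank K (LinearMap.range (E i)) = 1)
    (A : Module.End K V)
    (htri : ∀ i j : Fin (d + 1), 1 < Nat.dist (i : ℕ) (j : ℕ) → E i * A * E j = 0)
    (hirr : ∀ i j : Fin (d + 1), Nat.dist (i : ℕ) (j : ℕ) = 1 → E i * A * E j ≠ 0)
    (σ : Module.End K V →ₗ[K] Module.End K V)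
    (hσ : ∀ X Y, σ (X * Y) = σ X * σ Y) (hA : σ A = A) (hE0 : σ (E 0) = E 0)
    (X : Module.End K V) : σ X = X := by
  have hex : ∀ i, ∃ v : V, v ≠ 0 ∧ E i v = v ∧ ∀ x, ∃ c : K, E i x = c • v := by
    intro i
    obtain ⟨⟨v, y, rfl⟩, hv0, hv⟩ := finrank_eq_one_iff'.mp (hEr i)
    refine ⟨E i y, fun h => hv0 (Subtype.ext h), ?_, fun x => ?_⟩
    · have h := hE i i
      rw [if_pos rfl] at h
      exact congrArg (fun T : Module.End K V => T y) h
    · obtain ⟨c, hc⟩ := hv ⟨E i x, x, rfl⟩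
      exact ⟨c, (congrArg Subtype.val hc).symm⟩
  choose v hv0 hv hvs using hex
  let W : Submodule K V :=
    { carrier := {w | ∃ B : Module.End K V, σ B = B ∧ B (v 0) = w}
      add_mem' := by
        rintro _ _ ⟨B, hB, rfl⟩ ⟨C, hC, rfl⟩
        exact ⟨B + C, by rw [map_add, hB, hC], rfl⟩
      zero_mem' := ⟨0, map_zero _, rfl⟩
      smul_mem' := by
        rintro c _ ⟨B, hB, rfl⟩
        exact ⟨c • B, by rw [map_smul, hB], rfl⟩ }
  have hW : W = ⊤ := by
    refine aux_top hdim E hE A htri hirr v hv0 hv hvs W ⟨E 0, hE0, hv 0⟩ ?_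
    rintro _ ⟨B, hB, rfl⟩
    exact ⟨A * B, by rw [hσ, hA, hB], rfl⟩
  have hall : ∀ w, ∃ B : Module.End K V, σ B = B ∧ B (v 0) = w := by
    intro w
    have : w ∈ W := by rw [hW]; trivial
    exact this
  ext w
  obtain ⟨B, hB, rfl⟩ := hall w
  obtain ⟨C, hC, hCX⟩ := hall (X (B (v 0)))
  have h : X * (B * E 0) = C * E 0 := by
    ext x
    obtain ⟨c, hc⟩ := hvs 0 x
    simp [Module.End.mul_apply, hc, hCX]
  have h2 := congrArg σ h
  simp only [hσ, hB, hC, hE0] at h2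
  have h3 := congrArg (fun T : Module.End K V => T (v 0)) h2
  simp only [Module.End.mul_apply, hv, hCX] at h3
  exact h3


/-- Let `{E*_i}_{i=0}^d` be a system of mutually orthogonal idempotents in `End(V)`, and
let `A ∈ End(V)` satisfy `E*_i A E*_j = 0` if `|i−j| > 1` and `E*_i A E*_j ≠ 0` if
`|i−j| = 1`. If `γ` and `γ'` are antiautomorphisms of `End(V)` fixing `A` and `E*_0`,
then `γ = γ'`; moreover any such antiautomorphism `γ` satisfies `γ (γ X) = X` for all `X`. -/
theorem stmt_10 {K : Type*} [Field K] {d : ℕ}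
    {V : Type*} [AddCommGroup V] [Module K V] [FiniteDimensional K V]
    (hdim : Module.finrank K V = d + 1)
    (Estar : Fin (d + 1) → Module.End K V)
    (hEstar : ∀ i j, Estar i * Estar j = if i = j then Estar i else 0)
    (hEstarRank : ∀ i, Module.finrank K (LinearMap.range (Estar i)) = 1)
    (A : Module.End K V)
    (htri : ∀ i j : Fin (d + 1), 1 < Nat.dist (i : ℕ) (j : ℕ) → Estar i * A * Estar j = 0)
    (hirr : ∀ i j : Fin (d + 1), Nat.dist (i : ℕ) (j : ℕ) = 1 → Estar i * A * Estar j ≠ 0)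
    (γ γ' : Module.End K V ≃ₗ[K] Module.End K V)
    (hγ : ∀ X Y : Module.End K V, γ (X * Y) = γ Y * γ X)
    (hγ' : ∀ X Y : Module.End K V, γ' (X * Y) = γ' Y * γ' X)
    (hγA : γ A = A) (hγ'A : γ' A = A)
    (hγE : γ (Estar 0) = Estar 0) (hγ'E : γ' (Estar 0) = Estar 0) :
    γ = γ' ∧ ∀ X : Module.End K V, γ (γ X) = X := by
  have h1 : ∀ X, γ (γ X) = X := fun X =>
    aux_id hdim Estar hEstar hEstarRank A htri hirr (γ.toLinearMap ∘ₗ γ.toLinearMap)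
      (by intro X Y; simp [hγ]) (by simp [hγA]) (by simp [hγE]) X
  have h2 : ∀ X, γ' (γ X) = X := fun X =>
    aux_id hdim Estar hEstar hEstarRank A htri hirr (γ'.toLinearMap ∘ₗ γ.toLinearMap)
      (by intro X Y; simp [hγ, hγ']) (by simp [hγA, hγ'A]) (by simp [hγE, hγ'E]) X
  refine ⟨LinearEquiv.ext fun X => ?_, h1⟩
  have h := h2 (γ X)
  rw [h1] at h
  exact h.symm
end

section
/- Adopt the standing assumptions, let Δ be the associated graph, and suppose there exist β, γ*, δ* ∈ K such that θ*_{i−1} − β θ*_i + θ*_{i+1} = γ* for 1 ≤ i ≤ d−1 and θ*_{i−1}² − β θ*_{i−1} θ*_i + θ*_i² − γ*(θ*_{i−1} + θ*_i) = δ* for 1 ≤ i ≤ d. Let i and j be vertices of Δ at path-length distance 3, and suppose there is a unique path of length 3 in Δ connecting i and j; denote this path by (i, r, s, j). Then θ_i − (β+1)θ_r + (β+1)θ_s − θ_j = 0. -/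
theorem aux_basis {K : Type*} [Field K] {d : ℕ}
    {V : Type*} [AddCommGroup V] [Module K V] [FiniteDimensional K V]
    (hdim : Module.finrank K V = d + 1)
    (E : Fin (d + 1) → Module.End K V)
    (hE : ∀ i j, E i * E j = if i = j then E i else 0)
    (hEne : ∀ i, E i ≠ 0) :
    ∃ b : Module.Basis (Fin (d + 1)) K V, ∀ a c, E a (b c) = if a = c then b c else 0 := by
  have hex : ∀ i, ∃ w, E i w ≠ 0 := by
    intro i
    by_contra! h
    exact hEne i (LinearMap.ext h)
  choose w hw using hex
  have key : ∀ a c, E a (E c (w c)) = if a = c then E c (w c) else 0 := by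
    intro a c
    have := congrArg (fun f : Module.End K V => f (w c)) (hE a c)
    simp only [Module.End.mul_apply] at this
    rw [this]
    split_ifs with h
    · rw [h]
    · rfl
  have hli : LinearIndependent K (fun c => E c (w c)) := by
    rw [Fintype.linearIndependent_iff]
    intro g hg a
    have := congrArg (E a) hg
    simp only [map_sum, map_smul, key, map_zero, smul_ite, smul_zero, Finset.sum_ite_eq,
      Finset.mem_univ, if_true] at this
    exact (smul_eq_zero.mp this).resolve_right (hw a)
  refine ⟨basisOfLinearIndependentOfCardEqFinrank hli (by simp [hdim]), ?_⟩
  intro a c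
  simpa using key a c

theorem aux_sum {K : Type*} [Field K] {d : ℕ}
    {V : Type*} [AddCommGroup V] [Module K V]
    (E : Fin (d + 1) → Module.End K V)
    (b : Module.Basis (Fin (d + 1)) K V)
    (hb : ∀ a c, E a (b c) = if a = c then b c else 0) : ∑ i, E i = 1 := by
  refine b.ext fun c => ?_
  simp [LinearMap.sum_apply, hb]

theorem aux_prod {K : Type*} [Field K] {d : ℕ}
    {V : Type*} [AddCommGroup V] [Module K V]
    (E : Fin (d + 1) → Module.End K V)
    (b : Module.Basis (Fin (d + 1)) K V)
    (hb : ∀ a c, E a (b c) = if a = c then b c else 0)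
    (c : Fin (d + 1)) (X Y : Module.End K V) (hX : X * E c ≠ 0) (hY : E c * Y ≠ 0) :
    X * E c * Y ≠ 0 := by
  have hrk : ∀ x, E c x = b.repr x c • b c := by
    intro x
    conv_lhs => rw [← b.sum_repr x]
    simp only [map_sum, map_smul, hb, smul_ite, smul_zero, Finset.sum_ite_eq, Finset.mem_univ, if_true]
  intro h
  apply hY
  ext y
  have h1 := congrArg (fun f : Module.End K V => f y) h
  simp only [Module.End.mul_apply, LinearMap.zero_apply] at h1
  rw [hrk, map_smul] at h1
  rw [Module.End.mul_apply, hrk, LinearMap.zero_apply]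
  rcases smul_eq_zero.mp h1 with h2 | h2
  · rw [h2, zero_smul]
  · exfalso
    apply hX
    ext x
    rw [Module.End.mul_apply, hrk, map_smul, h2, smul_zero, LinearMap.zero_apply]


/-- With the standing assumptions, suppose `θ*_{i−1} − β θ*_i + θ*_{i+1} = γ*` for
`1 ≤ i ≤ d−1` and `θ*_{i−1}² − β θ*_{i−1} θ*_i + θ*_i² − γ*(θ*_{i−1} + θ*_i) = δ*` for
`1 ≤ i ≤ d`. Let `i, j` be vertices of `Δ` at path-length distance `3` joined by a
unique path `(i, r, s, j)` of length `3`. Then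
`θ_i − (β+1) θ_r + (β+1) θ_s − θ_j = 0`.
(Adjacency of distinct `a, b` in `Δ` means `E_a A* E_b ≠ 0`; "distance 3" is encoded
by: `i ≠ j`, `i, j` not adjacent, no common neighbour, and the path `(i,r,s,j)`.) -/
theorem stmt_18 {K : Type*} [Field K] {d : ℕ} (hd : 1 ≤ d)
    {V : Type*} [AddCommGroup V] [Module K V] [FiniteDimensional K V]
    (hdim : Module.finrank K V = d + 1)
    (Estar : Fin (d + 1) → Module.End K V)
    (hEstar : ∀ i j, Estar i * Estar j = if i = j then Estar i else 0)
    (hEstarRank : ∀ i, Module.finrank K (LinearMap.range (Estar i)) = 1)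
    (A : Module.End K V)
    (htri : ∀ i j : Fin (d + 1), 1 < Nat.dist (i : ℕ) (j : ℕ) → Estar i * A * Estar j = 0)
    (hirr : ∀ i j : Fin (d + 1), Nat.dist (i : ℕ) (j : ℕ) = 1 → Estar i * A * Estar j ≠ 0)
    (θ : Fin (d + 1) → K) (hθ : Function.Injective θ)
    (E : Fin (d + 1) → Module.End K V)
    (hE : ∀ i j, E i * E j = if i = j then E i else 0)
    (hEne : ∀ i, E i ≠ 0)
    (hEsum : ∑ i, E i = 1)
    (hA : A = ∑ i, θ i • E i)
    (θstar : Fin (d + 1) → K)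
    (Astar : Module.End K V) (hAstar : Astar = ∑ i, θstar i • Estar i)
    (β γstar δstar : K)
    (hrec : ∀ i : ℕ, ∀ _h1 : 1 ≤ i, ∀ _h2 : i ≤ d - 1,
      θstar ⟨i - 1, by omega⟩ - β * θstar ⟨i, by omega⟩ + θstar ⟨i + 1, by omega⟩ = γstar)
    (hrec2 : ∀ i : ℕ, ∀ _h1 : 1 ≤ i, ∀ _h2 : i ≤ d,
      θstar ⟨i - 1, by omega⟩ ^ 2 - β * θstar ⟨i - 1, by omega⟩ * θstar ⟨i, by omega⟩ +
          θstar ⟨i, by omega⟩ ^ 2 -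
          γstar * (θstar ⟨i - 1, by omega⟩ + θstar ⟨i, by omega⟩) = δstar)
    -- the adjacency relation of the graph `Δ`
    (Adj : Fin (d + 1) → Fin (d + 1) → Prop)
    (hAdj : ∀ a b, Adj a b ↔ a ≠ b ∧ E a * Astar * E b ≠ 0)
    -- vertices `i, j` at distance `3`, joined by the path `(i, r, s, j)`
    (i j r s : Fin (d + 1))
    (hij : i ≠ j) (hnot1 : ¬ Adj i j) (hnot2 : ∀ t, ¬(Adj i t ∧ Adj t j))
    (hir : Adj i r) (hrs : Adj r s) (hsj : Adj s j)
    -- `(i, r, s, j)` is the unique path of length `3` connecting `i` and `j`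
    (huniq : ∀ r' s' : Fin (d + 1), Adj i r' → Adj r' s' → Adj s' j → r' = r ∧ s' = s) :
    θ i - (β + 1) * θ r + (β + 1) * θ s - θ j = 0 := by


  have hEsne : ∀ i, Estar i ≠ 0 := by
    intro i h
    have := hEstarRank i
    rw [h, LinearMap.range_zero, finrank_bot] at this
    omega
  obtain ⟨bs, hbs⟩ := aux_basis hdim Estar hEstar hEsne
  obtain ⟨b, hb⟩ := aux_basis hdim E hE hEne
  have hssum := aux_sum Estar bs hbs
  -- eigen relations
  have l1 : ∀ a, Estar a * Astar = θstar a • Estar a := by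
    intro a
    simp [hAstar, Finset.mul_sum, hEstar]
  have l2 : ∀ a, Astar * Estar a = θstar a • Estar a := by
    intro a
    simp [hAstar, Finset.sum_mul, hEstar]
  have l1' : ∀ a M, Estar a * (Astar * M) = θstar a • (Estar a * M) := by
    intro a M
    rw [← mul_assoc, l1, smul_mul_assoc]
  have e1 : ∀ a, E a * A = θ a • E a := by
    intro a
    simp [hA, Finset.mul_sum, hE]
  have e2 : ∀ a, A * E a = θ a • E a := by
    intro a
    simp [hA, Finset.sum_mul, hE]
  have e1' : ∀ a M, E a * (A * M) = θ a • (E a * M) := by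
    intro a M
    rw [← mul_assoc, e1, smul_mul_assoc]
  have hcoef : ∀ a c : Fin (d + 1), Nat.dist (a : ℕ) (c : ℕ) = 1 →
      θstar a ^ 2 - β * θstar a * θstar c + θstar c ^ 2 - γstar * (θstar a + θstar c) - δstar
        = 0 := by
    intro a c hac
    have hac' : (a : ℕ) + 1 = c ∨ (c : ℕ) + 1 = a := by
      unfold Nat.dist at hac; omega
    rcases hac' with h | h
    · have h2 := hrec2 c (by omega) (by omega)
      have ha : (⟨(c : ℕ) - 1, by omega⟩ : Fin (d + 1)) = a := Fin.ext (by simp; omega)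
      have hc : (⟨(c : ℕ), by omega⟩ : Fin (d + 1)) = c := rfl
      rw [ha, hc] at h2
      linear_combination h2
    · have h2 := hrec2 a (by omega) (by omega)
      have ha : (⟨(a : ℕ) - 1, by omega⟩ : Fin (d + 1)) = c := Fin.ext (by simp; omega)
      have hc : (⟨(a : ℕ), by omega⟩ : Fin (d + 1)) = a := rfl
      rw [ha, hc] at h2
      linear_combination h2
  obtain ⟨Z, hZ⟩ : ∃ Z : Module.End K V, Z = Astar * (Astar * (Astar * A))
      - (β + 1) • (Astar * (Astar * (A * Astar)))
      + (β + 1) • (Astar * (A * (Astar * Astar))) - A * (Astar * (Astar * Astar))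
      - γstar • (Astar * (Astar * A) - A * (Astar * Astar))
      - δstar • (Astar * A - A * Astar) := ⟨_, rfl⟩
  have hZac : ∀ a c, Estar a * (Z * Estar c) = 0 := by
    intro a c
    have h1 : Estar a * (Z * Estar c) = ((θstar a - θstar c) *
        (θstar a ^ 2 - β * θstar a * θstar c + θstar c ^ 2 - γstar * (θstar a + θstar c)
          - δstar)) • (Estar a * (A * Estar c)) := by
      rw [hZ]
      simp only [sub_mul, add_mul, mul_sub, mul_add, smul_mul_assoc, mul_smul_comm, mul_assoc,
        l1', l2, smul_sub]
      module
    rw [h1]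
    rcases lt_trichotomy (Nat.dist (a : ℕ) (c : ℕ)) 1 with h | h | h
    · have : a = c := Fin.ext (by unfold Nat.dist at h; omega)
      rw [this]; simp
    · rw [hcoef a c h]; simp
    · rw [← mul_assoc, htri a c h, smul_zero]
  have hZ0 : Z = 0 := by
    have : (∑ a, Estar a) * (Z * ∑ c, Estar c) = 0 := by
      simp [Finset.sum_mul, Finset.mul_sum, hZac]
    simpa [hssum] using this
  -- adjacency
  have hB : ∀ a c, a ≠ c → ¬ Adj a c → E a * (Astar * E c) = 0 := by
    intro a c hac h
    rw [hAdj] at h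
    push Not at h
    rw [← mul_assoc]; exact h hac
  have idem : ∀ a M, E a * (E a * M) = E a * M := by
    intro a M
    rw [← mul_assoc, hE, if_pos rfl]
  have hB' : ∀ a c M, a ≠ c → ¬ Adj a c → E a * (Astar * (E c * M)) = 0 := by
    intro a c M hac h
    have := congrArg (· * M) (hB a c hac h)
    simpa [mul_assoc] using this
  have ins : ∀ M N : Module.End K V, M * N = ∑ t, M * (E t * N) := by
    intro M N
    rw [← Finset.mul_sum, ← Finset.sum_mul, hEsum, one_mul]
  have hone : E i * (Astar * E j) = 0 := hB i j hij hnot1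
  have htwo : ∀ t, E i * (Astar * (E t * (Astar * E j))) = 0 := by
    intro t
    by_cases h1 : i = t
    · subst h1; rw [hone]; simp
    by_cases h2 : t = j
    · subst h2; exact hB' _ _ _ hij hnot1
    by_cases h3 : Adj i t
    · rw [hB t j h2 (fun h => hnot2 t ⟨h3, h⟩)]; simp
    · exact hB' _ _ _ h1 h3
  have htwo' : E i * (Astar * (Astar * E j)) = 0 := by
    have := ins (E i * Astar) (Astar * E j)
    simp only [mul_assoc, htwo, Finset.sum_const_zero] at this
    exact this
  have hthree : ∀ t u, ¬ (t = r ∧ u = s) →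
      E i * (Astar * (E t * (Astar * (E u * (Astar * E j))))) = 0 := by
    intro t u h
    by_cases h1 : i = t
    · subst h1; rw [htwo]; simp
    by_cases h2 : u = j
    · subst h2
      have := congrArg (· * (Astar * E u)) (htwo t)
      simpa only [mul_assoc, zero_mul] using this
    by_cases h3 : Adj i t
    swap
    · exact hB' _ _ _ h1 h3
    by_cases h4 : Adj u j
    swap
    · rw [hB u j h2 h4]; simp
    by_cases h5 : t = u
    · subst h5; exact absurd ⟨h3, h4⟩ (hnot2 t)
    by_cases h6 : Adj t u
    · exact absurd (huniq t u h3 h6 h4) h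
    · rw [hB' _ _ _ h5 h6]; simp
  obtain ⟨P, hP⟩ : ∃ P, P = E i * (Astar * (E r * (Astar * (E s * (Astar * E j))))) := ⟨_, rfl⟩
  have hins2 : ∀ f g : Fin (d + 1) → K,
      ∑ t, ∑ u, (f t * g u) • (E i * (Astar * (E t * (Astar * (E u * (Astar * E j))))))
        = (f r * g s) • P := by
    intro f g
    rw [Finset.sum_eq_single r, Finset.sum_eq_single s, hP]
    · intro u _ hu
      rw [hthree r u (fun h => hu h.2), smul_zero]
    · simp
    · intro t _ ht
      refine Finset.sum_eq_zero fun u _ => ?_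
      rw [hthree t u (fun h => ht h.1), smul_zero]
    · simp
  have t1 : E i * (Astar * (Astar * (Astar * E j))) = P := by
    have h := hins2 (fun _ => 1) (fun _ => 1)
    simp only [one_mul, one_smul] at h
    rw [← h]
    simp only [← Finset.mul_sum, ← Finset.sum_mul, hEsum, one_mul]
  have AM : ∀ M, A * M = ∑ t, θ t • (E t * M) := by
    intro M
    rw [hA, Finset.sum_mul]; simp
  have t2 : E i * (Astar * (Astar * (A * (Astar * E j)))) = θ s • P := by
    have h := hins2 (fun _ => 1) θ
    simp only [one_mul] at h
    rw [← h, AM]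
    simp only [← mul_smul_comm, ← Finset.mul_sum]
    simp only [← Finset.mul_sum, ← Finset.sum_mul, hEsum, one_mul]
  have t3 : E i * (Astar * (A * (Astar * (Astar * E j)))) = θ r • P := by
    have h := hins2 θ (fun _ => 1)
    simp only [mul_one] at h
    rw [← h, AM]
    simp only [← Finset.smul_sum, ← Finset.mul_sum, ← Finset.sum_mul, hEsum, one_mul]
    simp only [← mul_smul_comm, ← Finset.mul_sum]
  have hPne : P ≠ 0 := by
    have h1 := ((hAdj i r).1 hir).2
    have h2 := ((hAdj r s).1 hrs).2
    have h3 := ((hAdj s j).1 hsj).2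
    rw [mul_assoc] at h2 h3
    have h23 := aux_prod E b hb s (E r * Astar) (Astar * E j) (by simpa [mul_assoc] using h2) h3
    have := aux_prod E b hb r (E i * Astar) (Astar * (E s * (Astar * E j))) h1
      (by simpa [mul_assoc] using h23)
    rw [hP]; simpa only [mul_assoc] using this
  have hfin : E i * (Z * E j) = 0 := by rw [hZ0]; simp
  have hfin2 : E i * (Z * E j) = (θ j - (β + 1) * θ s + (β + 1) * θ r - θ i) • P := by
    rw [hZ]
    simp only [sub_mul, add_mul, mul_sub, mul_add, smul_mul_assoc, mul_smul_comm, mul_assoc,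
        e1', e2, smul_sub, t1, t2, t3, hone, htwo', smul_zero]
    module
  rw [hfin2] at hfin
  have := (smul_eq_zero.mp hfin).resolve_right hPne
  linear_combination -this
end
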